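/- Let p be an odd prime, K a finite extension of ℚ_p with normalized discrete valuation v_K, let e ∈ K* be a non-square with v_K(e) even (so E = K(√e) is unramified over K), and let L = K(√d) be a ramified quadratic extension of K. If −e ∈ N_{L/K}(L*), then −1 ∉ N_{L/K}(L*), and there exists α ∈ K* with α ∉ N_{L/K}(L*) and α² − e ∉ N_{L/K}(L*). -/

import Mathlib

open Module

/-- `normGroup K L` is the set of norms `N_{L/K}(t)` of nonzero elements `t ∈ L`. -/
def normGroup (K L : Type*) [Field K] [Field L] [Algebra K L] : Set K :=
  {x : K | ∃ t : L, t ≠ 0 ∧ Algebra.norm K t = x}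

/-- `v` is the normalized discrete valuation of the `p`-adic field `K`. -/
def IsNormalizedValuation (p : ℕ) [Fact p.Prime] {K : Type*} [Field K] [Algebra ℚ_[p] K]
    (v : K → ℤ) : Prop :=
  (∀ x y : K, x ≠ 0 → y ≠ 0 → v (x * y) = v x + v y) ∧
  (∀ x y : K, x ≠ 0 → y ≠ 0 → x + y ≠ 0 → min (v x) (v y) ≤ v (x + y)) ∧
  (∀ n : ℤ, ∃ x : K, x ≠ 0 ∧ v x = n) ∧
  0 < v (algebraMap ℚ_[p] K (p : ℚ_[p]))

section Hensel

variable {F : Type*} [NormedField F]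

theorem one_add_ne_zero_of_norm_lt_one {x : F} (hx : ‖x‖ < 1) : 1 + x ≠ 0 := by
  intro h
  rw [eq_neg_of_add_eq_zero_right h, norm_neg, norm_one] at hx
  exact lt_irrefl _ hx

variable [CompleteSpace F] [IsUltrametricDist F]

/-- In a complete ultrametric field with `‖2‖ = 1`, every `1 + x` with `‖x‖ < 1` has a square root
`1 + t` with `‖t‖ ≤ ‖x‖`. -/
theorem exists_one_add_sq_eq_one_add (h2 : ‖(2 : F)‖ = 1) {x : F} (hx : ‖x‖ < 1) :
    ∃ t : F, ‖t‖ ≤ ‖x‖ ∧ (1 + t) ^ 2 = 1 + x := by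
  have h20 : (2 : F) ≠ 0 := by
    rw [← norm_ne_zero_iff, h2]
    exact one_ne_zero
  let f : F → F := fun t ↦ (x - t ^ 2) / 2
  let s : Set F := Metric.closedBall 0 ‖x‖
  have hmaps : Set.MapsTo f s s := by
    intro t ht
    simp only [s, mem_closedBall_zero_iff] at ht ⊢
    simp only [f, norm_div, h2, div_one]
    refine (sub_eq_add_neg x (t ^ 2) ▸ IsUltrametricDist.norm_add_le_max x (-(t ^ 2))).trans
      (max_le le_rfl ?_)
    rw [norm_neg, norm_pow]
    nlinarith [norm_nonneg t]
  have hcontr : ContractingWith ‖x‖₊ (hmaps.restrict f s s) := by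
    refine ⟨by exact_mod_cast hx, LipschitzWith.of_dist_le_mul ?_⟩
    rintro ⟨a, ha⟩ ⟨b, hb⟩
    simp only [s, mem_closedBall_zero_iff] at ha hb
    have hab : f a - f b = (b + a) * (b - a) / 2 := by simp only [f]; ring
    have hsum : ‖b + a‖ ≤ ‖x‖ :=
      (IsUltrametricDist.norm_add_le_max b a).trans (max_le hb ha)
    calc dist (f a) (f b) = ‖b + a‖ * ‖a - b‖ := by
          rw [dist_eq_norm, hab, norm_div, norm_mul, h2, div_one, norm_sub_rev b a]
      _ ≤ ‖x‖ * dist a b := by rw [dist_eq_norm]; gcongr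
  obtain ⟨t, hts, hfix, -⟩ := hcontr.exists_fixedPoint' (Metric.isClosed_closedBall.isComplete)
    hmaps (x := 0) (by simp [s]) (edist_ne_top _ _)
  refine ⟨t, by simpa [s] using hts, ?_⟩
  have ht : (x - t ^ 2) / 2 = t := hfix
  rw [div_eq_iff h20] at ht
  linear_combination -ht

/-- Elements of `1 + 𝔪` are `2 ^ k`-th powers of elements of `1 + 𝔪` for every `k`. -/
theorem exists_one_add_pow_two_pow_eq_one_add (h2 : ‖(2 : F)‖ = 1) (k : ℕ) {x : F}
    (hx : ‖x‖ < 1) : ∃ t : F, ‖t‖ < 1 ∧ (1 + t) ^ 2 ^ k = 1 + x := by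
  induction k with
  | zero => exact ⟨x, hx, by simp⟩
  | succ k ih =>
    obtain ⟨t, ht, htx⟩ := ih
    obtain ⟨u, hu, hut⟩ := exists_one_add_sq_eq_one_add h2 ht
    exact ⟨u, hu.trans_lt ht, by rw [pow_succ', pow_mul, hut, htx]⟩

end Hensel

namespace IsNormalizedValuation

variable {p : ℕ} [Fact p.Prime]

section Basic

variable {K : Type*} [Field K] [Algebra ℚ_[p] K] {v : K → ℤ}

theorem map_mul (hv : IsNormalizedValuation p v) {x y : K} (hx : x ≠ 0) (hy : y ≠ 0) :
    v (x * y) = v x + v y := hv.1 x y hx hy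

theorem min_le_map_add (hv : IsNormalizedValuation p v) {x y : K} (hx : x ≠ 0) (hy : y ≠ 0)
    (hxy : x + y ≠ 0) : min (v x) (v y) ≤ v (x + y) := hv.2.1 x y hx hy hxy

theorem map_one (hv : IsNormalizedValuation p v) : v 1 = 0 := by
  have := hv.map_mul (one_ne_zero (α := K)) one_ne_zero
  rw [mul_one] at this
  omega

theorem map_pow (hv : IsNormalizedValuation p v) {x : K} (hx : x ≠ 0) (n : ℕ) :
    v (x ^ n) = n * v x := by
  induction n with
  | zero => simp [hv.map_one]
  | succ n ih =>
    rw [pow_succ, hv.map_mul (pow_ne_zero n hx) hx, ih]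
    push_cast
    ring

theorem map_sq (hv : IsNormalizedValuation p v) {x : K} (hx : x ≠ 0) : v (x ^ 2) = 2 * v x :=
  hv.map_pow hx 2

theorem map_neg (hv : IsNormalizedValuation p v) {x : K} (hx : x ≠ 0) : v (-x) = v x := by
  have h := hv.map_sq (neg_ne_zero.2 hx)
  rw [neg_sq, hv.map_sq hx] at h
  omega

theorem map_inv (hv : IsNormalizedValuation p v) {x : K} (hx : x ≠ 0) : v x⁻¹ = -v x := by
  have h := hv.map_mul hx (inv_ne_zero hx)
  rw [mul_inv_cancel₀ hx, hv.map_one] at h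
  omega

theorem map_add_of_lt (hv : IsNormalizedValuation p v) {x y : K} (hx : x ≠ 0) (hy : y ≠ 0)
    (h : v x < v y) : v (x + y) = v x := by
  have hxy : x + y ≠ 0 := by
    intro h0
    rw [eq_neg_of_add_eq_zero_right h0, hv.map_neg hx] at h
    exact lt_irrefl _ h
  have h1 := hv.min_le_map_add hx hy hxy
  have h2 := hv.min_le_map_add hxy (neg_ne_zero.2 hy) (by simpa using hx)
  rw [add_neg_cancel_right, hv.map_neg hy] at h2
  omega

theorem map_prime_pos (hv : IsNormalizedValuation p v) : 0 < v (p : K) := by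
  simpa using hv.2.2.2

theorem map_natCast_nonneg [CharZero K] (hv : IsNormalizedValuation p v) {n : ℕ} (hn : n ≠ 0) :
    0 ≤ v (n : K) := by
  induction n with
  | zero => exact absurd rfl hn
  | succ n ih =>
    rcases eq_or_ne n 0 with rfl | hn0
    · simp [hv.map_one]
    · have h := hv.min_le_map_add (Nat.cast_ne_zero.2 hn0) one_ne_zero
        (by exact_mod_cast Nat.succ_ne_zero n)
      rw [hv.map_one] at h
      push_cast
      have := ih hn0
      omega

theorem map_natCast_eq_zero [CharZero K] (hv : IsNormalizedValuation p v) {n : ℕ} (hn : n ≠ 0)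
    (hnp : n < p) : v (n : K) = 0 := by
  have hp : p.Prime := Fact.out
  obtain ⟨m, -, hm⟩ := Nat.exists_mul_mod_eq_one_of_coprime
    (Nat.coprime_of_lt_prime hn hnp hp).symm hp.one_lt
  have hm0 : m ≠ 0 := by
    rintro rfl
    simp at hm
  have hdecomp : n * m = 1 + p * (n * m / p) := by
    have := Nat.mod_add_div (n * m) p
    omega
  have hmul : v ((n * m : ℕ) : K) = v (n : K) + v (m : K) := by
    rw [Nat.cast_mul]
    exact hv.map_mul (Nat.cast_ne_zero.2 hn) (Nat.cast_ne_zero.2 hm0)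
  have hnn := hv.map_natCast_nonneg hn
  have hmn := hv.map_natCast_nonneg hm0
  suffices v ((n * m : ℕ) : K) = 0 by omega
  rcases eq_or_ne (n * m / p) 0 with h0 | h0
  · rw [hdecomp, h0]
    simp [hv.map_one]
  · have hq := hv.map_natCast_nonneg h0
    have hp0 : (p : K) ≠ 0 := Nat.cast_ne_zero.2 hp.ne_zero
    have hq0 : ((n * m / p : ℕ) : K) ≠ 0 := Nat.cast_ne_zero.2 h0
    rw [hdecomp, Nat.cast_add, Nat.cast_one, Nat.cast_mul,
      hv.map_add_of_lt one_ne_zero (mul_ne_zero hp0 hq0), hv.map_one]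
    rw [hv.map_one, hv.map_mul hp0 hq0]
    have := hv.map_prime_pos
    omega

end Basic

section Normed

variable {F : Type*} [NormedField F] [CompleteSpace F] [IsUltrametricDist F] [Algebra ℚ_[p] F]
  {v : F → ℤ}

theorem map_one_add_of_norm_lt_one (hv : IsNormalizedValuation p v) (h2 : ‖(2 : F)‖ = 1) {x : F}
    (hx : ‖x‖ < 1) : v (1 + x) = 0 := by
  obtain ⟨t, ht, htx⟩ := exists_one_add_pow_two_pow_eq_one_add h2 (v (1 + x)).natAbs hx
  have hdvd : ((2 ^ (v (1 + x)).natAbs : ℕ) : ℤ) ∣ v (1 + x) :=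
    ⟨v (1 + t), by rw [← hv.map_pow (one_add_ne_zero_of_norm_lt_one ht), htx]⟩
  exact Int.natAbs_eq_zero.1
    (Nat.eq_zero_of_dvd_of_lt (Int.natCast_dvd.1 hdvd) Nat.lt_two_pow_self)

theorem norm_lt_one_of_pos (hv : IsNormalizedValuation p v) (h2 : ‖(2 : F)‖ = 1)
    (hp0 : (p : F) ≠ 0) (hp : ‖(p : F)‖ < 1) {x : F} (hx0 : x ≠ 0) (hx : 0 < v x) : ‖x‖ < 1 := by
  by_contra! hle
  have hy0 : x⁻¹ ≠ 0 := inv_ne_zero hx0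
  have hy : ‖x⁻¹‖ ≤ 1 := by
    rw [norm_inv]
    exact inv_le_one_of_one_le₀ hle
  set n := (v (p : F)).toNat + 1 with hn
  have hpos := hv.map_prime_pos
  have hvn : v (p * x⁻¹ ^ n) < 0 := by
    rw [hv.map_mul hp0 (pow_ne_zero _ hy0), hv.map_pow hy0, hv.map_inv hx0]
    have : (n : ℤ) = v (p : F) + 1 := by omega
    nlinarith
  have hnorm : ‖(p : F) * x⁻¹ ^ n‖ < 1 := by
    rw [norm_mul, norm_pow]
    exact mul_lt_one_of_nonneg_of_lt_one_left (norm_nonneg _) hp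
      (pow_le_one₀ (norm_nonneg _) hy)
  have h1 := hv.map_one_add_of_norm_lt_one h2 hnorm
  rw [add_comm, hv.map_add_of_lt (mul_ne_zero hp0 (pow_ne_zero _ hy0)) one_ne_zero
    (by rwa [hv.map_one])] at h1
  omega

end Normed

section FiniteDimensional

variable {K : Type*} [Field K] [Algebra ℚ_[p] K] [FiniteDimensional ℚ_[p] K] {v : K → ℤ}

theorem isSquare_one_add (hv : IsNormalizedValuation p v) (hp2 : p ≠ 2) {x : K} (hx0 : x ≠ 0)
    (hx : 0 < v x) : IsSquare (1 + x) := by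
  have hp : p.Prime := Fact.out
  let _ : NormedField K := spectralNorm.normedField ℚ_[p] K
  have : CompleteSpace K := spectralNorm.completeSpace ℚ_[p] K
  have : IsUltrametricDist K :=
    IsUltrametricDist.isUltrametricDist_of_forall_norm_add_le_max_norm
      (isNonarchimedean_spectralNorm (K := ℚ_[p]) (L := K))
  have hnat (n : ℕ) : ‖(n : K)‖ = ‖(n : ℚ_[p])‖ := by
    have h : ‖algebraMap ℚ_[p] K n‖ = ‖(n : ℚ_[p])‖ := spectralNorm_extends _
    rwa [map_natCast] at h
  have h2 : ‖(2 : K)‖ = 1 := by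
    have h := hnat 2
    rw [Padic.norm_natCast_eq_one_iff.2 ((Nat.coprime_primes hp Nat.prime_two).2 hp2)] at h
    exact_mod_cast h
  have hp1 : ‖(p : K)‖ < 1 := (hnat p).trans_lt Padic.norm_p_lt_one
  have hp0 : (p : K) ≠ 0 := by
    have := charZero_of_injective_algebraMap (algebraMap ℚ_[p] K).injective
    exact Nat.cast_ne_zero.2 hp.ne_zero
  obtain ⟨t, -, ht⟩ := exists_one_add_sq_eq_one_add h2 (hv.norm_lt_one_of_pos h2 hp0 hp1 hx0 hx)
  exact ⟨1 + t, by rw [← ht, sq]⟩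

theorem isSquare_sq_add (hv : IsNormalizedValuation p v) (hp2 : p ≠ 2) {x y : K} (hx0 : x ≠ 0)
    (hy0 : y ≠ 0) (h : 2 * v x < v y) : IsSquare (x ^ 2 + y) := by
  have hx2 : x ^ 2 ≠ 0 := pow_ne_zero 2 hx0
  have hfac : x ^ 2 + y = x ^ 2 * (1 + y * (x ^ 2)⁻¹) := by field_simp
  rw [hfac]
  refine (IsSquare.sq x).mul (hv.isSquare_one_add hp2 (mul_ne_zero hy0 (inv_ne_zero hx2)) ?_)
  rw [hv.map_mul hy0 (inv_ne_zero hx2), hv.map_inv hx2, hv.map_sq hx0]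
  omega

/-- If `-1` is not a square, then some `β ^ 2 + 1` with `β ≠ 0` is a non-square unit: otherwise
`1, 2, …, p - 1` are all squares, and so is `-1 = (p - 1) - p`. -/
theorem exists_not_isSquare_sq_add_one (hv : IsNormalizedValuation p v) (hp2 : p ≠ 2)
    (h : ¬ IsSquare (-1 : K)) :
    ∃ β : K, β ≠ 0 ∧ ¬ IsSquare (β ^ 2 + 1) ∧ v (β ^ 2 + 1) = 0 := by
  have hp : p.Prime := Fact.out
  have := charZero_of_injective_algebraMap (algebraMap ℚ_[p] K).injective
  by_contra! hall
  have hsq (n : ℕ) (hn : n + 1 < p) : IsSquare ((n + 1 : ℕ) : K) := by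
    induction n with
    | zero => simp
    | succ n ih =>
      obtain ⟨β, hβ⟩ := ih (by omega)
      by_contra hns
      have hβ0 : β ≠ 0 := by
        rintro rfl
        rw [mul_zero] at hβ
        exact Nat.cast_ne_zero.2 n.succ_ne_zero hβ
      have heq : ((n + 1 + 1 : ℕ) : K) = β ^ 2 + 1 := by
        rw [Nat.cast_add (n + 1), hβ, Nat.cast_one, sq]
      refine hall β hβ0 (heq ▸ hns) ?_
      rw [← heq]
      exact hv.map_natCast_eq_zero (by omega) hn
  have h2p := hp.two_le
  obtain ⟨c, hc⟩ := hsq (p - 2) (by omega)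
  have hval : v ((p - 2 + 1 : ℕ) : K) = 0 := hv.map_natCast_eq_zero (by omega) (by omega)
  have hc0 : c ≠ 0 := by
    rintro rfl
    rw [mul_zero] at hc
    exact Nat.cast_ne_zero.2 (Nat.succ_ne_zero _) hc
  have hp0 : (p : K) ≠ 0 := Nat.cast_ne_zero.2 hp.ne_zero
  rw [hc, ← sq, hv.map_sq hc0] at hval
  have hcp : c ^ 2 + -(p : K) = -1 := by
    have hcast : ((p - 2 + 1 : ℕ) : K) + 1 = p := by
      rw [← Nat.cast_add_one]
      congr 1
      omega
    linear_combination hcast - hc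
  refine h (hcp ▸ hv.isSquare_sq_add hp2 hc0 (neg_ne_zero.2 hp0) ?_)
  rw [hv.map_neg hp0, hval]
  exact hv.map_prime_pos

end FiniteDimensional

end IsNormalizedValuation

section Norm

variable {K L : Type*} [Field K] [Field L] [Algebra K L]

/-- For `L = K(s)` quadratic with `s ^ 2 = d`, every element is `a + b s` and its norm is
`a ^ 2 - d b ^ 2`. -/
theorem exists_eq_add_mul_sqrt_and_norm {d : K} (hd : ¬ IsSquare d) (hL2 : finrank K L = 2)
    {s : L} (hs : s ^ 2 = algebraMap K L d) (t : L) :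
    ∃ a b : K, t = algebraMap K L a + algebraMap K L b * s ∧
      Algebra.norm K t = a ^ 2 - d * b ^ 2 := by
  have hli : LinearIndependent K ![(1 : L), s] := by
    rw [LinearIndependent.pair_iff' one_ne_zero]
    intro a ha
    rw [Algebra.smul_def, mul_one] at ha
    refine hd ⟨a, (algebraMap K L).injective ?_⟩
    rw [← hs, ← ha, sq, map_mul]
  let B : Basis (Fin 2) K L := basisOfLinearIndependentOfCardEqFinrank hli (by simp [hL2])
  have hB0 : B 0 = 1 := by simp [B]
  have hB1 : B 1 = s := by simp [B]
  have hrepr (x y : K) : B.repr (algebraMap K L x + algebraMap K L y * s) =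
      Finsupp.single 0 x + Finsupp.single 1 y := by
    rw [← hB1, ← Algebra.smul_def, Algebra.algebraMap_eq_smul_one, ← hB0]
    simp
  have ht : t = algebraMap K L (B.repr t 0) + algebraMap K L (B.repr t 1) * s := by
    conv_lhs => rw [← B.sum_repr t]
    simp [Fin.sum_univ_two, hB0, hB1, Algebra.smul_def]
  refine ⟨_, _, ht, ?_⟩
  generalize B.repr t 0 = a at ht ⊢
  generalize B.repr t 1 = b at ht ⊢
  have hmul : t * s = algebraMap K L (d * b) + algebraMap K L a * s := by
    rw [ht, map_mul]
    linear_combination algebraMap K L b * hs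
  rw [Algebra.norm_eq_matrix_det B, Matrix.det_fin_two]
  simp only [Algebra.leftMulMatrix_eq_repr_mul, hB0, hB1, mul_one, hmul, hrepr]
  rw [ht, hrepr]
  simp
  ring

theorem sq_mem_normGroup (hL2 : finrank K L = 2) {x : K} (hx : x ≠ 0) :
    x ^ 2 ∈ normGroup K L :=
  ⟨algebraMap K L x, by simpa using hx, by rw [Algebra.norm_algebraMap, hL2]⟩

theorem mul_mem_normGroup {x y : K} (hx : x ∈ normGroup K L) (hy : y ∈ normGroup K L) :
    x * y ∈ normGroup K L := by
  obtain ⟨s, hs, rfl⟩ := hx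
  obtain ⟨t, ht, rfl⟩ := hy
  exact ⟨s * t, mul_ne_zero hs ht, map_mul _ _ _⟩

theorem inv_mem_normGroup {x : K} (hx : x ∈ normGroup K L) : x⁻¹ ∈ normGroup K L := by
  obtain ⟨s, hs, rfl⟩ := hx
  exact ⟨s⁻¹, inv_ne_zero hs, eq_inv_of_mul_eq_one_left (by
    rw [← map_mul, inv_mul_cancel₀ hs, map_one])⟩

end Norm

section Ramified

variable {p : ℕ} [Fact p.Prime] {K : Type*} [Field K] [Algebra ℚ_[p] K]
  [FiniteDimensional ℚ_[p] K] {vK : K → ℤ} {d : K}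
  {L : Type*} [Field L] [Algebra K L]

/-- A square root of `d` generating a ramified quadratic extension forces `d` to have odd
valuation. -/
theorem odd_of_ramified [Algebra ℚ_[p] L] (hp2 : p ≠ 2) (hvK : IsNormalizedValuation p vK)
    (hd0 : d ≠ 0) (hd : ¬ IsSquare d) (hL2 : finrank K L = 2) {s : L}
    (hs : s ^ 2 = algebraMap K L d) {vL : L → ℤ} (hvL : IsNormalizedValuation p vL)
    (hram : ∀ x : K, x ≠ 0 → vL (algebraMap K L x) = 2 * vK x) : Odd (vK d) := by
  have halg {x : K} (hx : x ≠ 0) : algebraMap K L x ≠ 0 := by simpa using hx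
  have hs0 : s ≠ 0 := by
    rintro rfl
    rw [zero_pow two_ne_zero] at hs
    exact halg hd0 hs.symm
  have hvs : vL s = vK d := by
    have h := hvL.map_sq hs0
    rw [hs, hram d hd0] at h
    omega
  by_contra hodd
  rw [Int.not_odd_iff_even] at hodd
  obtain ⟨k, hk⟩ := hodd
  obtain ⟨x, hx0, hx1⟩ := hvL.2.2.1 1
  obtain ⟨a, b, rfl, -⟩ := exists_eq_add_mul_sqrt_and_norm hd hL2 hs x
  rcases eq_or_ne b 0 with rfl | hb
  · rcases eq_or_ne a 0 with rfl | ha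
    · simp at hx0
    · rw [map_zero, zero_mul, add_zero, hram a ha] at hx1
      omega
  have hbs0 : algebraMap K L b * s ≠ 0 := mul_ne_zero (halg hb) hs0
  have hvbs : vL (algebraMap K L b * s) = 2 * vK b + vK d := by
    rw [hvL.map_mul (halg hb) hs0, hram b hb, hvs]
  rcases eq_or_ne a 0 with rfl | ha
  · rw [map_zero, zero_add] at hx1
    omega
  have hva := hram a ha
  rcases lt_trichotomy (vL (algebraMap K L a)) (vL (algebraMap K L b * s)) with h | h | h
  · rw [hvL.map_add_of_lt (halg ha) hbs0 h] at hx1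
    omega
  · have hn0 : a ^ 2 - d * b ^ 2 ≠ 0 := by
      intro h0
      exact hd ⟨a / b, by field_simp; linear_combination -h0⟩
    have hprod : (algebraMap K L a + algebraMap K L b * s) *
        (algebraMap K L a + -(algebraMap K L b * s)) = algebraMap K L (a ^ 2 - d * b ^ 2) := by
      rw [map_sub, map_mul, map_pow, map_pow, ← hs]
      ring
    have hconj0 : algebraMap K L a + -(algebraMap K L b * s) ≠ 0 :=
      right_ne_zero_of_mul (hprod ▸ halg hn0)
    have hsum := hvL.map_mul hx0 hconj0
    rw [hprod, hram _ hn0] at hsum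
    have h1 := hvL.min_le_map_add (halg ha) hbs0 hx0
    have h2 := hvL.min_le_map_add (halg ha) (neg_ne_zero.2 hbs0) hconj0
    rw [hvL.map_neg hbs0] at h2
    rcases lt_or_ge (2 * vK a) (vK (a ^ 2 - d * b ^ 2)) with hlt | hge
    · have hsq := hvK.isSquare_sq_add hp2 ha (neg_ne_zero.2 hn0) (by rwa [hvK.map_neg hn0])
      obtain ⟨c, hc⟩ := hsq
      exact hd ⟨c / b, by field_simp; linear_combination hc⟩
    · omega
  · rw [add_comm, hvL.map_add_of_lt hbs0 (halg ha) h] at hx1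
    omega

/-- If `d` has odd valuation, norms of even valuation from `K(√d)` are squares. -/
theorem isSquare_of_mem_normGroup_of_even (hp2 : p ≠ 2) (hvK : IsNormalizedValuation p vK)
    (hd0 : d ≠ 0) (hd : ¬ IsSquare d) (hdodd : Odd (vK d)) (hL2 : finrank K L = 2) {s : L}
    (hs : s ^ 2 = algebraMap K L d) {x : K} (hx : x ∈ normGroup K L) (hxe : Even (vK x)) :
    IsSquare x := by
  obtain ⟨t, -, rfl⟩ := hx
  obtain ⟨a, b, -, hN⟩ := exists_eq_add_mul_sqrt_and_norm hd hL2 hs t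
  rw [hN, sub_eq_add_neg] at hxe ⊢
  rcases eq_or_ne b 0 with rfl | hb
  · simp [IsSquare.sq]
  have hdb0 : d * b ^ 2 ≠ 0 := mul_ne_zero hd0 (pow_ne_zero 2 hb)
  have hvdb : vK (-(d * b ^ 2)) = vK d + 2 * vK b := by
    rw [hvK.map_neg hdb0, hvK.map_mul hd0 (pow_ne_zero 2 hb), hvK.map_sq hb]
  obtain ⟨k, hk⟩ := hdodd
  obtain ⟨l, hl⟩ := hxe
  rcases eq_or_ne a 0 with rfl | ha
  · rw [zero_pow two_ne_zero, zero_add] at hl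
    omega
  have hva := hvK.map_sq ha
  rcases lt_or_ge (2 * vK a) (vK (-(d * b ^ 2))) with h | h
  · exact hvK.isSquare_sq_add hp2 ha (neg_ne_zero.2 hdb0) h
  · rw [add_comm, hvK.map_add_of_lt (neg_ne_zero.2 hdb0) (pow_ne_zero 2 ha) (by omega)] at hl
    omega

end Ramified

/-- Case (1) of the proof of Theorem 1.2: `p` an odd prime, `K` a `p`-adic field,
`e ∈ K*` a non-square of even valuation (so `E = K(√e)` is unramified), and
`L = K(√d)` a ramified quadratic extension of `K`. If `-e ∈ N_{L/K}(L*)`, then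
`-1 ∉ N_{L/K}(L*)` and there exists `α ∈ K*` with `α ∉ N_{L/K}(L*)` and
`α² - e ∉ N_{L/K}(L*)`. -/
theorem stmt_8 (p : ℕ) [Fact p.Prime] (hp : p ≠ 2)
    (K : Type*) [Field K] [Algebra ℚ_[p] K] [FiniteDimensional ℚ_[p] K]
    (vK : K → ℤ) (hvK : IsNormalizedValuation p vK)
    (e : K) (he0 : e ≠ 0) (he : ¬ IsSquare e) (hve : Even (vK e))
    (d : K) (hd0 : d ≠ 0) (hd : ¬ IsSquare d)
    (L : Type*) [Field L] [Algebra K L] [Algebra ℚ_[p] L] [IsScalarTower ℚ_[p] K L]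
    (hL2 : finrank K L = 2)
    (hLd : ∃ s : L, s ^ 2 = algebraMap K L d)
    (vL : L → ℤ) (hvL : IsNormalizedValuation p vL)
    (hram : ∀ x : K, x ≠ 0 → vL (algebraMap K L x) = 2 * vK x)
    (hne : -e ∈ normGroup K L) :
    (-1 : K) ∉ normGroup K L ∧
    ∃ α : K, α ≠ 0 ∧ α ∉ normGroup K L ∧ α ^ 2 - e ∉ normGroup K L := by
  obtain ⟨s, hs⟩ := hLd
  have hdodd := odd_of_ramified hp hvK hd0 hd hL2 hs hvL hram
  have hsq {x : K} (hx : x ∈ normGroup K L) (hxe : Even (vK x)) : IsSquare x :=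
    isSquare_of_mem_normGroup_of_even hp hvK hd0 hd hdodd hL2 hs hx hxe
  obtain ⟨f, hf⟩ := hsq hne (by rwa [hvK.map_neg he0])
  have hf0 : f ≠ 0 := by
    rintro rfl
    simp [he0] at hf
  have hneg1 : ¬ IsSquare (-1 : K) := by
    rintro ⟨i, hi⟩
    exact he ⟨i * f, by linear_combination -hf + f * f * hi⟩
  have hneg1N : (-1 : K) ∉ normGroup K L := fun h ↦
    hneg1 (hsq h (by rw [hvK.map_neg one_ne_zero, hvK.map_one]; exact Even.zero))
  refine ⟨hneg1N, ?_⟩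
  obtain ⟨β, hβ0, hβ, hvβ⟩ := hvK.exists_not_isSquare_sq_add_one hp hneg1
  have hα0 : f * β ≠ 0 := mul_ne_zero hf0 hβ0
  have hnorm : (f * β) ^ 2 - e ∉ normGroup K L := by
    intro h
    refine hβ (hsq ?_ (by rw [hvβ]; exact Even.zero))
    have hmem := mul_mem_normGroup (inv_mem_normGroup (sq_mem_normGroup (L := L) hL2 hf0)) h
    convert hmem using 1
    field_simp
    linear_combination -hf
  by_cases hα : f * β ∈ normGroup K L
  · refine ⟨-(f * β), neg_ne_zero.2 hα0, fun hα' ↦ hneg1N ?_, by rwa [neg_sq]⟩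
    have hmem := mul_mem_normGroup hα' (inv_mem_normGroup hα)
    rwa [neg_mul, mul_inv_cancel₀ hα0] at hmem
  · exact ⟨f * β, hα0, hα, hnorm⟩
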